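/- arXiv:1605.01302 — 6 statements merged into one kernel-verified Lean document; each statement's English description precedes it below -/
import Mathlib

section
/- Let α ∈ (0,1), λ ∈ [0,1), and let b, c be reals with 0 ≤ c ≤ 1 and 0 < b < 1. If b + α·c ≤ S(α,λ) and λ·b + c ≤ S(α,λ), then (α·c)/(1-b) ≤ (1-(c+λ·b))/(b-λ·b). -/
noncomputable def S (a lam : ℝ) : ℝ :=
  (1 - a * lam) * ((2 - a * lam - a) + (lam - 1) * Real.sqrt (4 * a - 3 * a ^ 2)) /
    (2 * (1 - a) * (a * lam - a * lam ^ 2 - a + 1))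

noncomputable def bPlus (a lam : ℝ) : ℝ :=
  ((2 - a * lam - a) + (1 - lam) * Real.sqrt (4 * a - 3 * a ^ 2)) /
    (2 * (-(a * lam ^ 2) + a * lam - a + 1))

noncomputable def bMinus (a lam : ℝ) : ℝ :=
  ((2 - a * lam - a) - (1 - lam) * Real.sqrt (4 * a - 3 * a ^ 2)) /
    (2 * (-(a * lam ^ 2) + a * lam - a + 1))

noncomputable def s1 (a lam b : ℝ) : ℝ :=
  ((a * lam ^ 2 - a * lam) * b ^ 2 + b - 1) / ((a * lam - a + 1) * b - 1)

noncomputable def s2 (a lam b : ℝ) : ℝ :=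
  ((1 - a) * b ^ 2 + (a * lam + a - 1) * b - a) / ((a * lam - a + 1) * b - 1)

noncomputable def f (a lam : ℝ) : ℝ :=
  2 * (1 - a) * (a * lam - a * lam ^ 2 - a + 1) /
    ((1 - a * lam) * ((2 - a * lam - a) + (lam - 1) * Real.sqrt (4 * a - 3 * a ^ 2)))

/-!
Solving the schedulability condition for `c` turns it into `c ≤ C b`, where `C b` is the weighted
harmonic mean of `1 - lam * b` and `1 - b` with weights `1 - a` and `a`; as a function of `b` it is
concave on `[0, 1]`. Hence so are `s1 b = lam * b + C b` and `s2 b = b + a * C b`. Both take the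
value `S` at `bMinus`, while `s1 0 = s2 1 = 1` and `S ≤ 1`, so concavity gives `S ≤ s1` to the left
of `bMinus` and `S ≤ s2` to its right. On either side one of the two bounds on `(b, c)` then
yields `c ≤ C b`.
-/

/-- The weighted harmonic mean of `p.1` and `p.2` with weights `1 - w` and `w`, written as a
quotient of polynomials so that it extends continuously by `0` to `p.2 = 0 < p.1`. -/
noncomputable def weightedHarmonicMean (w : ℝ) (p : ℝ × ℝ) : ℝ :=
  p.1 * p.2 / ((1 - w) * p.2 + w * p.1)

/-- The largest utilization `c` that is schedulable together with the utilization `b`, as given by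
`schedulable_iff_le_maxUtilization`. -/
noncomputable def maxUtilization (a lam b : ℝ) : ℝ :=
  weightedHarmonicMean a (1 - lam * b, 1 - b)

lemma weightedHarmonicMean_denom_pos {w u v : ℝ} (hw0 : 0 < w) (hw1 : w ≤ 1) (hu : 0 < u)
    (hv : 0 ≤ v) : 0 < (1 - w) * v + w * u :=
  add_pos_of_nonneg_of_pos (mul_nonneg (sub_nonneg.2 hw1) hv) (mul_pos hw0 hu)

lemma weightedHarmonicMean_combo_sub {w u₁ v₁ u₂ v₂ s t : ℝ}
    (hd₁ : (1 - w) * v₁ + w * u₁ ≠ 0) (hd₂ : (1 - w) * v₂ + w * u₂ ≠ 0)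
    (hd : (1 - w) * (s * v₁ + t * v₂) + w * (s * u₁ + t * u₂) ≠ 0) :
    weightedHarmonicMean w (s * u₁ + t * u₂, s * v₁ + t * v₂) -
        (s * weightedHarmonicMean w (u₁, v₁) + t * weightedHarmonicMean w (u₂, v₂)) =
      s * t * (w * (1 - w)) * (u₁ * v₂ - u₂ * v₁) ^ 2 /
        (((1 - w) * (s * v₁ + t * v₂) + w * (s * u₁ + t * u₂)) *
          (((1 - w) * v₁ + w * u₁) * ((1 - w) * v₂ + w * u₂))) := by
  simp only [weightedHarmonicMean]
  have hd₁₂ := mul_ne_zero hd₁ hd₂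
  rw [← mul_div_assoc, ← mul_div_assoc, div_add_div _ _ hd₁ hd₂, div_sub_div _ _ hd hd₁₂]
  congr 1
  ring

lemma concaveOn_weightedHarmonicMean {w : ℝ} (hw0 : 0 < w) (hw1 : w ≤ 1) :
    ConcaveOn ℝ (Set.Ioi 0 ×ˢ Set.Ici 0) (weightedHarmonicMean w) := by
  have hconv : Convex ℝ (Set.Ioi (0 : ℝ) ×ˢ Set.Ici (0 : ℝ)) := (convex_Ioi 0).prod (convex_Ici 0)
  refine ⟨hconv, ?_⟩
  rintro ⟨u₁, v₁⟩ h₁ ⟨u₂, v₂⟩ h₂ s t hs ht hst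
  have denom_pos {p : ℝ × ℝ} (hp : p ∈ Set.Ioi (0 : ℝ) ×ˢ Set.Ici (0 : ℝ)) :
      0 < (1 - w) * p.2 + w * p.1 := weightedHarmonicMean_denom_pos hw0 hw1 hp.1 hp.2
  have hd₁ := denom_pos h₁
  have hd₂ := denom_pos h₂
  have hd := denom_pos (hconv h₁ h₂ hs ht hst)
  have hw : 0 ≤ w * (1 - w) := mul_nonneg hw0.le (sub_nonneg.2 hw1)
  refine sub_nonneg.1 (le_of_le_of_eq ?_
    (weightedHarmonicMean_combo_sub hd₁.ne' hd₂.ne' hd.ne').symm)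
  exact div_nonneg (mul_nonneg (mul_nonneg (mul_nonneg hs ht) hw) (sq_nonneg _))
    (mul_pos hd (mul_pos hd₁ hd₂)).le

lemma one_sub_mul_pos {lam b : ℝ} (hl1 : lam < 1) (hb : b ∈ Set.Icc (0 : ℝ) 1) :
    0 < 1 - lam * b := by
  rcases hb.1.eq_or_lt with rfl | hb0
  · simp
  · linarith [mul_lt_mul_of_pos_right hl1 hb0, hb.2]

lemma maxUtilization_denom_pos {a lam b : ℝ} (ha0 : 0 < a) (hl1 : lam < 1)
    (hb : b ∈ Set.Icc (0 : ℝ) 1) : 0 < (1 - a) * (1 - b) + a * (1 - lam * b) := by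
  rcases hb.1.eq_or_lt with rfl | hb0
  · simp
  · linarith [mul_pos (mul_pos ha0 hb0) (sub_pos.2 hl1), hb.2]

lemma concaveOn_maxUtilization {a lam : ℝ} (ha0 : 0 < a) (ha1 : a ≤ 1) (hl1 : lam < 1) :
    ConcaveOn ℝ (Set.Icc 0 1) (maxUtilization a lam) := by
  let line : ℝ →ᵃ[ℝ] ℝ × ℝ := AffineMap.lineMap (1, 1) (1 - lam, 0)
  have hline (b : ℝ) : line b = (1 - lam * b, 1 - b) := by
    ext <;> simp [line, AffineMap.lineMap_apply] <;> ring
  have hcomp : weightedHarmonicMean a ∘ line = maxUtilization a lam :=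
    funext fun b ↦ congrArg (weightedHarmonicMean a) (hline b)
  rw [← hcomp]
  refine ((concaveOn_weightedHarmonicMean ha0 ha1).comp_affineMap line).subset ?_ (convex_Icc 0 1)
  intro b hb
  rw [Set.mem_preimage, hline]
  exact ⟨one_sub_mul_pos hl1 hb, sub_nonneg.2 hb.2⟩

lemma schedulable_iff_le_maxUtilization {a lam b c : ℝ} (ha0 : 0 < a) (hl1 : lam < 1)
    (hb0 : 0 < b) (hb1 : b < 1) :
    a * c / (1 - b) ≤ (1 - (c + lam * b)) / (b - lam * b) ↔ c ≤ maxUtilization a lam b := by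
  have hb : 0 < b - lam * b := by linarith [mul_lt_mul_of_pos_right hl1 hb0]
  rw [maxUtilization, weightedHarmonicMean, div_le_div_iff₀ (sub_pos.2 hb1) hb,
    le_div_iff₀ (maxUtilization_denom_pos ha0 hl1 ⟨hb0.le, hb1.le⟩)]
  constructor <;> intro h <;> linarith

lemma s1_eq {a lam b : ℝ} (ha0 : 0 < a) (hl1 : lam < 1) (hb : b ∈ Set.Icc (0 : ℝ) 1) :
    s1 a lam b = lam * b + maxUtilization a lam b := by
  have hd := maxUtilization_denom_pos ha0 hl1 hb
  have hneg : (a * lam - a + 1) * b - 1 = -((1 - a) * (1 - b) + a * (1 - lam * b)) := by ring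
  rw [s1, maxUtilization, weightedHarmonicMean, hneg]
  field_simp
  ring

lemma s2_eq {a lam b : ℝ} (ha0 : 0 < a) (hl1 : lam < 1) (hb : b ∈ Set.Icc (0 : ℝ) 1) :
    s2 a lam b = b + a * maxUtilization a lam b := by
  have hd := maxUtilization_denom_pos ha0 hl1 hb
  have hneg : (a * lam - a + 1) * b - 1 = -((1 - a) * (1 - b) + a * (1 - lam * b)) := by ring
  rw [s2, maxUtilization, weightedHarmonicMean, hneg, ← mul_div_assoc,
    add_comm b, div_add' _ _ _ hd.ne', div_eq_div_iff (neg_ne_zero.2 hd.ne') hd.ne']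
  ring

lemma concaveOn_s1 {a lam : ℝ} (ha0 : 0 < a) (ha1 : a ≤ 1) (hl1 : lam < 1) :
    ConcaveOn ℝ (Set.Icc 0 1) (s1 a lam) :=
  (((LinearMap.mulLeft ℝ lam).concaveOn (convex_Icc 0 1)).add
    (concaveOn_maxUtilization ha0 ha1 hl1)).congr fun _ hb ↦ (s1_eq ha0 hl1 hb).symm

lemma concaveOn_s2 {a lam : ℝ} (ha0 : 0 < a) (ha1 : a ≤ 1) (hl1 : lam < 1) :
    ConcaveOn ℝ (Set.Icc 0 1) (s2 a lam) :=
  ((concaveOn_id (convex_Icc 0 1)).add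
    ((concaveOn_maxUtilization ha0 ha1 hl1).smul ha0.le)).congr
      fun _ hb ↦ (s2_eq ha0 hl1 hb).symm

lemma s1_zero (a lam : ℝ) : s1 a lam 0 = 1 := by simp [s1]

lemma s2_one {a lam : ℝ} (ha : a ≠ 0) (hl : lam ≠ 1) : s2 a lam 1 = 1 := by
  have hd : (a * lam - a + 1) * 1 - 1 ≠ 0 := by
    convert mul_ne_zero ha (sub_ne_zero.2 hl) using 1
    ring
  rw [s2, div_eq_one_iff_eq hd]
  ring

lemma sq_sqrt_four_mul_sub {a : ℝ} (ha0 : 0 ≤ a) (ha1 : a ≤ 1) :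
    √(4 * a - 3 * a ^ 2) ^ 2 = 4 * a - 3 * a ^ 2 :=
  Real.sq_sqrt (by nlinarith)

lemma le_sqrt_four_mul_sub {a : ℝ} (ha0 : 0 ≤ a) (ha1 : a ≤ 1) : a ≤ √(4 * a - 3 * a ^ 2) :=
  Real.le_sqrt_of_sq_le (by nlinarith)

lemma S_eq_mul_bMinus (a lam : ℝ) : S a lam = (1 - a * lam) / (1 - a) * bMinus a lam := by
  rw [S, bMinus, div_mul_div_comm]
  congr 1 <;> ring

lemma bMinus_root {a lam : ℝ} (ha0 : 0 ≤ a) (ha1 : a ≤ 1)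
    (hQ : a * lam - a * lam ^ 2 - a + 1 ≠ 0) :
    (a * lam - a * lam ^ 2 - a + 1) * (bMinus a lam * bMinus a lam) +
      -(2 - a * lam - a) * bMinus a lam + (1 - a) = 0 := by
  have hdiscrim : discrim (a * lam - a * lam ^ 2 - a + 1) (-(2 - a * lam - a)) (1 - a) =
      (1 - lam) * √(4 * a - 3 * a ^ 2) * ((1 - lam) * √(4 * a - 3 * a ^ 2)) := by
    rw [discrim]
    linear_combination -(1 - lam) ^ 2 * sq_sqrt_four_mul_sub ha0 ha1
  refine (quadratic_eq_zero_iff hQ hdiscrim _).2 (Or.inr ?_)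
  rw [bMinus]
  congr 1 <;> ring

lemma bMinus_mul_conj {a lam : ℝ} (ha0 : 0 ≤ a) (ha1 : a ≤ 1)
    (hQ : a * lam - a * lam ^ 2 - a + 1 ≠ 0) :
    bMinus a lam * ((2 - a * lam - a) + (1 - lam) * √(4 * a - 3 * a ^ 2)) = 2 * (1 - a) := by
  have hQ' : 2 * (-(a * lam ^ 2) + a * lam - a + 1) ≠ 0 := by
    convert mul_ne_zero two_ne_zero hQ using 1
    ring
  rw [bMinus, div_mul_eq_mul_div, div_eq_iff hQ']
  linear_combination -(1 - lam) ^ 2 * sq_sqrt_four_mul_sub ha0 ha1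

lemma bMinus_pos {a lam : ℝ} (ha0 : 0 ≤ a) (ha1 : a < 1) (hl1 : lam < 1)
    (hQ : a * lam - a * lam ^ 2 - a + 1 ≠ 0) : 0 < bMinus a lam := by
  have hal : 0 < 1 - lam * a := one_sub_mul_pos hl1 ⟨ha0, ha1.le⟩
  have hr : 0 ≤ (1 - lam) * √(4 * a - 3 * a ^ 2) :=
    mul_nonneg (sub_nonneg.2 hl1.le) (Real.sqrt_nonneg _)
  have hprod : 0 < bMinus a lam * ((2 - a * lam - a) + (1 - lam) * √(4 * a - 3 * a ^ 2)) := by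
    rw [bMinus_mul_conj ha0 ha1.le hQ]
    linarith
  exact pos_of_mul_pos_left hprod (by linarith)

lemma mul_bMinus_le {a lam : ℝ} (ha0 : 0 ≤ a) (ha1 : a < 1) (hl1 : lam < 1)
    (hQ : a * lam - a * lam ^ 2 - a + 1 ≠ 0) : (1 - a * lam) * bMinus a lam ≤ 1 - a := by
  have hconj : 2 * (1 - a * lam) ≤ (2 - a * lam - a) + (1 - lam) * √(4 * a - 3 * a ^ 2) := by
    linarith [mul_le_mul_of_nonneg_left (le_sqrt_four_mul_sub ha0 ha1.le) (sub_nonneg.2 hl1.le)]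
  linarith [mul_le_mul_of_nonneg_left hconj (bMinus_pos ha0 ha1 hl1 hQ).le,
    bMinus_mul_conj ha0 ha1.le hQ]

lemma bMinus_mem_Icc {a lam : ℝ} (ha0 : 0 ≤ a) (ha1 : a < 1) (hl1 : lam < 1)
    (hQ : a * lam - a * lam ^ 2 - a + 1 ≠ 0) : bMinus a lam ∈ Set.Icc (0 : ℝ) 1 := by
  refine ⟨(bMinus_pos ha0 ha1 hl1 hQ).le, ?_⟩
  have hal : 0 < 1 - lam * a := one_sub_mul_pos hl1 ⟨ha0, ha1.le⟩
  have hle : a * lam ≤ a := mul_le_of_le_one_right ha0 hl1.le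
  refine le_of_mul_le_mul_left ?_ (mul_comm lam a ▸ hal)
  linarith [mul_bMinus_le ha0 ha1 hl1 hQ]

lemma S_le_one {a lam : ℝ} (ha0 : 0 ≤ a) (ha1 : a < 1) (hl1 : lam < 1)
    (hQ : a * lam - a * lam ^ 2 - a + 1 ≠ 0) : S a lam ≤ 1 := by
  rw [S_eq_mul_bMinus, div_mul_eq_mul_div]
  exact div_le_one_of_le₀ (mul_bMinus_le ha0 ha1 hl1 hQ) (sub_nonneg.2 ha1.le)

lemma maxUtilization_bMinus {a lam : ℝ} (ha0 : 0 < a) (ha1 : a < 1) (hl1 : lam < 1)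
    (hQ : a * lam - a * lam ^ 2 - a + 1 ≠ 0) :
    maxUtilization a lam (bMinus a lam) = (1 - lam) * bMinus a lam / (1 - a) := by
  have hd := maxUtilization_denom_pos ha0 hl1 (bMinus_mem_Icc ha0.le ha1 hl1 hQ)
  rw [maxUtilization, weightedHarmonicMean, div_eq_div_iff hd.ne' (sub_pos.2 ha1).ne']
  linear_combination bMinus_root ha0.le ha1.le hQ

lemma s1_bMinus {a lam : ℝ} (ha0 : 0 < a) (ha1 : a < 1) (hl1 : lam < 1)
    (hQ : a * lam - a * lam ^ 2 - a + 1 ≠ 0) : s1 a lam (bMinus a lam) = S a lam := by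
  rw [s1_eq ha0 hl1 (bMinus_mem_Icc ha0.le ha1 hl1 hQ),
    maxUtilization_bMinus ha0 ha1 hl1 hQ, S_eq_mul_bMinus]
  have : 1 - a ≠ 0 := (sub_pos.2 ha1).ne'
  field_simp
  ring

lemma s2_bMinus {a lam : ℝ} (ha0 : 0 < a) (ha1 : a < 1) (hl1 : lam < 1)
    (hQ : a * lam - a * lam ^ 2 - a + 1 ≠ 0) : s2 a lam (bMinus a lam) = S a lam := by
  rw [s2_eq ha0 hl1 (bMinus_mem_Icc ha0.le ha1 hl1 hQ),
    maxUtilization_bMinus ha0 ha1 hl1 hQ, S_eq_mul_bMinus]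
  have : 1 - a ≠ 0 := (sub_pos.2 ha1).ne'
  field_simp
  ring

lemma S_le_s1 {a lam b : ℝ} (ha0 : 0 < a) (ha1 : a < 1) (hl1 : lam < 1)
    (hQ : a * lam - a * lam ^ 2 - a + 1 ≠ 0) (hb : b ∈ Set.Icc 0 (bMinus a lam)) :
    S a lam ≤ s1 a lam b := by
  have hmin := (concaveOn_s1 ha0 ha1.le hl1).min_le_of_mem_Icc (Set.left_mem_Icc.2 zero_le_one)
    (bMinus_mem_Icc ha0.le ha1 hl1 hQ) hb
  rwa [s1_zero, s1_bMinus ha0 ha1 hl1 hQ, min_eq_right (S_le_one ha0.le ha1 hl1 hQ)] at hmin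

lemma S_le_s2 {a lam b : ℝ} (ha0 : 0 < a) (ha1 : a < 1) (hl1 : lam < 1)
    (hQ : a * lam - a * lam ^ 2 - a + 1 ≠ 0) (hb : b ∈ Set.Icc (bMinus a lam) 1) :
    S a lam ≤ s2 a lam b := by
  have hmin := (concaveOn_s2 ha0 ha1.le hl1).min_le_of_mem_Icc
    (bMinus_mem_Icc ha0.le ha1 hl1 hQ) (Set.right_mem_Icc.2 zero_le_one) hb
  rwa [s2_one ha0.ne' hl1.ne, s2_bMinus ha0 ha1 hl1 hQ,
    min_eq_left (S_le_one ha0.le ha1 hl1 hQ)] at hmin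

theorem stmt_0_general (a lam b c : ℝ) (ha0 : 0 < a) (ha1 : a < 1) (hl1 : lam < 1)
    (hQ : a * lam - a * lam ^ 2 - a + 1 ≠ 0) (hb0 : 0 < b) (hb1 : b < 1)
    (h1 : b + a * c ≤ S a lam) (h2 : lam * b + c ≤ S a lam) :
    (a * c) / (1 - b) ≤ (1 - (c + lam * b)) / (b - lam * b) := by
  rw [schedulable_iff_le_maxUtilization ha0 hl1 hb0 hb1]
  have hb : b ∈ Set.Icc (0 : ℝ) 1 := ⟨hb0.le, hb1.le⟩
  rcases le_total b (bMinus a lam) with hleft | hright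
  · have hs1 : lam * b + c ≤ s1 a lam b := h2.trans (S_le_s1 ha0 ha1 hl1 hQ ⟨hb0.le, hleft⟩)
    rw [s1_eq ha0 hl1 hb] at hs1
    exact le_of_add_le_add_left hs1
  · have hs2 : b + a * c ≤ s2 a lam b := h1.trans (S_le_s2 ha0 ha1 hl1 hQ ⟨hright, hb1.le⟩)
    rw [s2_eq ha0 hl1 hb] at hs2
    exact le_of_mul_le_mul_left (le_of_add_le_add_left hs2) ha0

theorem stmt_0 (a lam b c : ℝ) (ha0 : 0 < a) (ha1 : a < 1)
    (hl0 : 0 ≤ lam) (hl1 : lam < 1) (hc0 : 0 ≤ c) (hc1 : c ≤ 1)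
    (hb0 : 0 < b) (hb1 : b < 1)
    (h1 : b + a * c ≤ S a lam) (h2 : lam * b + c ≤ S a lam) :
    (a * c) / (1 - b) ≤ (1 - (c + lam * b)) / (b - lam * b) := by
  have hQ : 0 < a * lam - a * lam ^ 2 - a + 1 := by
    linarith [mul_nonneg (mul_nonneg ha0.le hl0) (sub_nonneg.2 hl1.le)]
  exact stmt_0_general a lam b c ha0 ha1 hl1 hQ.ne' hb0 hb1 h1 h2
end

section
/- For all α ∈ (0,1) and λ ∈ [0,1): b₊(α,λ) > 1 and 0 ≤ b₋(α,λ) ≤ 1. -/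
/-!
Both numbers are roots of `q(b) = D b² + (αλ + α - 2) b + (1 - α)` with
`D = -αλ² + αλ - α + 1 > 0`, whose discriminant is `(1 - λ)² (4α - 3α²)`. Since
`q(1) = -α (1 - λ)² < 0`, the point `1` lies strictly between the roots; since the linear
coefficient is nonpositive and the constant one nonnegative, neither root is negative.
-/

section Quadratic

theorem abs_two_mul_mul_add_lt_of_quadratic_neg {R : Type*} [CommRing R] [LinearOrder R]
    [IsStrictOrderedRing R] {a b c s x : R} (ha : 0 < a) (hs : 0 ≤ s)
    (hd : discrim a b c = s * s) (hx : a * (x * x) + b * x + c < 0) :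
    |2 * a * x + b| < s := by
  have complete_square :
      (2 * a * x + b) ^ 2 = s ^ 2 + 4 * a * (a * (x * x) + b * x + c) := by
    rw [sq s, ← hd, discrim]
    ring
  apply abs_lt_of_sq_lt_sq _ hs
  rw [complete_square]
  exact add_lt_of_neg_right _ (mul_neg_of_pos_of_neg (by positivity) hx)

variable {K : Type*} [Field K] [LinearOrder K] [IsStrictOrderedRing K] {a b c s x : K}

theorem lt_neg_add_div_two_mul_of_quadratic_neg (ha : 0 < a) (hs : 0 ≤ s)
    (hd : discrim a b c = s * s) (hx : a * (x * x) + b * x + c < 0) :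
    x < (-b + s) / (2 * a) := by
  have h := (abs_lt.mp (abs_two_mul_mul_add_lt_of_quadratic_neg ha hs hd hx)).2
  rw [lt_div_iff₀' (by positivity)]
  linarith

theorem neg_sub_div_two_mul_lt_of_quadratic_neg (ha : 0 < a) (hs : 0 ≤ s)
    (hd : discrim a b c = s * s) (hx : a * (x * x) + b * x + c < 0) :
    (-b - s) / (2 * a) < x := by
  have h := (abs_lt.mp (abs_two_mul_mul_add_lt_of_quadratic_neg ha hs hd hx)).1
  rw [div_lt_iff₀' (by positivity)]
  linarith

theorem neg_sub_div_two_mul_nonneg_of_discrim_eq (ha : 0 < a) (hb : b ≤ 0) (hc : 0 ≤ c)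
    (hd : discrim a b c = s * s) :
    0 ≤ (-b - s) / (2 * a) := by
  have hsq : s ^ 2 ≤ (-b) ^ 2 := by
    rw [sq s, ← hd, discrim, neg_sq]
    exact sub_le_self _ (by positivity)
  have hsb : s ≤ -b := (abs_le_of_sq_le_sq' hsq (neg_nonneg.mpr hb)).2
  exact div_nonneg (sub_nonneg.mpr hsb) (by positivity)

end Quadratic

section Roots

/-- The leading coefficient `D` of the quadratic in `b` whose roots are `bPlus a lam` and
`bMinus a lam`; half the denominator of either root. -/
def bLeadCoeff (a lam : ℝ) : ℝ :=
  -(a * lam ^ 2) + a * lam - a + 1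

variable {a lam : ℝ}

theorem bPlus_eq (a lam : ℝ) :
    bPlus a lam = (-(a * lam + a - 2) + (1 - lam) * √(4 * a - 3 * a ^ 2)) /
      (2 * bLeadCoeff a lam) := by
  rw [bPlus, bLeadCoeff]
  congr 2
  ring

theorem bMinus_eq (a lam : ℝ) :
    bMinus a lam = (-(a * lam + a - 2) - (1 - lam) * √(4 * a - 3 * a ^ 2)) /
      (2 * bLeadCoeff a lam) := by
  rw [bMinus, bLeadCoeff]
  congr 2
  ring

theorem discrim_bQuadratic (ha : 0 ≤ a) (hD : 0 ≤ bLeadCoeff a lam) :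
    discrim (bLeadCoeff a lam) (a * lam + a - 2) (1 - a) =
      ((1 - lam) * √(4 * a - 3 * a ^ 2)) * ((1 - lam) * √(4 * a - 3 * a ^ 2)) := by
  have radicand_nonneg : 0 ≤ 4 * a - 3 * a ^ 2 := by
    calc
      0 ≤ 4 * a * bLeadCoeff a lam + (a * (1 - 2 * lam)) ^ 2 := by positivity
      _ = 4 * a - 3 * a ^ 2 := by unfold bLeadCoeff; ring
  rw [mul_mul_mul_comm, Real.mul_self_sqrt radicand_nonneg, discrim, bLeadCoeff]
  ring

theorem bQuadratic_one_neg (ha : 0 < a) (hl : lam < 1) :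
    bLeadCoeff a lam * (1 * 1) + (a * lam + a - 2) * 1 + (1 - a) < 0 := by
  calc
    _ = -(a * (1 - lam) ^ 2) := by unfold bLeadCoeff; ring
    _ < 0 := neg_neg_of_pos (mul_pos ha (pow_pos (sub_pos.mpr hl) 2))

theorem one_lt_bPlus (ha : 0 < a) (hl : lam < 1) (hD : 0 < bLeadCoeff a lam) :
    1 < bPlus a lam := by
  rw [bPlus_eq]
  exact lt_neg_add_div_two_mul_of_quadratic_neg hD
    (mul_nonneg (sub_nonneg.mpr hl.le) (Real.sqrt_nonneg _))
    (discrim_bQuadratic ha.le hD.le) (bQuadratic_one_neg ha hl)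

theorem bMinus_lt_one (ha : 0 < a) (hl : lam < 1) (hD : 0 < bLeadCoeff a lam) :
    bMinus a lam < 1 := by
  rw [bMinus_eq]
  exact neg_sub_div_two_mul_lt_of_quadratic_neg hD
    (mul_nonneg (sub_nonneg.mpr hl.le) (Real.sqrt_nonneg _))
    (discrim_bQuadratic ha.le hD.le) (bQuadratic_one_neg ha hl)

theorem bMinus_nonneg (ha0 : 0 ≤ a) (ha1 : a ≤ 1) (hl : lam ≤ 1)
    (hD : 0 < bLeadCoeff a lam) :
    0 ≤ bMinus a lam := by
  have linear_coeff_nonpos : a * lam + a - 2 ≤ 0 := by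
    linarith [mul_le_of_le_one_right ha0 hl]
  rw [bMinus_eq]
  exact neg_sub_div_two_mul_nonneg_of_discrim_eq hD linear_coeff_nonpos (sub_nonneg.mpr ha1)
    (discrim_bQuadratic ha0 hD.le)

theorem bLeadCoeff_pos (ha0 : 0 ≤ a) (ha1 : a < 1) (hl0 : 0 ≤ lam) (hl1 : lam ≤ 1) :
    0 < bLeadCoeff a lam := by
  calc
    0 < a * lam * (1 - lam) + (1 - a) :=
      add_pos_of_nonneg_of_pos
        (mul_nonneg (mul_nonneg ha0 hl0) (sub_nonneg.mpr hl1)) (sub_pos.mpr ha1)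
    _ = bLeadCoeff a lam := by unfold bLeadCoeff; ring

end Roots

theorem stmt_5_general (a lam : ℝ) (ha0 : 0 < a) (ha1 : a ≤ 1) (hl : lam < 1)
    (hD : 0 < bLeadCoeff a lam) :
    1 < bPlus a lam ∧ 0 ≤ bMinus a lam ∧ bMinus a lam < 1 :=
  ⟨one_lt_bPlus ha0 hl hD, bMinus_nonneg ha0.le ha1 hl.le hD, bMinus_lt_one ha0 hl hD⟩

theorem stmt_5 (a lam : ℝ) (ha0 : 0 < a) (ha1 : a < 1)
    (hl0 : 0 ≤ lam) (hl1 : lam < 1) :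
    bPlus a lam > 1 ∧ 0 ≤ bMinus a lam ∧ bMinus a lam ≤ 1 :=
  have hD := bLeadCoeff_pos ha0.le ha1 hl0 hl1.le
  (stmt_5_general a lam ha0 ha1.le hl1 hD).imp_right (And.imp_right le_of_lt)
end

section
/- For α ∈ (0,1) and λ ∈ [0,1), the function s₁(b) = ((αλ²-αλ)·b² + b - 1)/((αλ-α+1)·b - 1) is strictly decreasing (strictly antitone) on the interval (0,1]. -/
/-!
For `g b = (p b² + b - 1) / (c b - 1)` with `c < 1` and `0 ≤ x < y ≤ 1`, the difference `g x - g y`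
has the sign of `1 - c + p t`, where `t = x + y - c x y` lies in `(0, 2 - c)`. This expression is
affine in `t` and positive at `t = 0`, so it only has to be nonnegative at `t = 2 - c`; for `s1` its
value there factors as `a (1 - lam)² (1 - a lam)`.
-/

section QuadraticDivLinear

variable {K : Type*} [Field K]

theorem quadratic_div_linear_sub {c x y : K} (p : K) (hx : c * x - 1 ≠ 0) (hy : c * y - 1 ≠ 0) :
    (p * x ^ 2 + x - 1) / (c * x - 1) - (p * y ^ 2 + y - 1) / (c * y - 1) =
      (y - x) * (1 - c + p * (x + y - c * x * y)) / ((c * x - 1) * (c * y - 1)) := by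
  rw [div_sub_div _ _ hx hy]
  ring

variable [LinearOrder K] [IsStrictOrderedRing K] {c p t x y : K}

theorem mul_lt_one_of_lt_one_of_mem_Icc (hc : c < 1) (hx : x ∈ Set.Icc 0 1) : c * x < 1 := by
  obtain rfl | hx_pos := hx.1.eq_or_lt
  · simp
  · exact (mul_lt_of_lt_one_left hx_pos hc).trans_le hx.2

theorem add_sub_mul_mem_Ioo (hc : c < 1) (hx : x ∈ Set.Icc 0 1) (hy : y ∈ Set.Icc 0 1)
    (hxy : x < y) : x + y - c * x * y ∈ Set.Ioo 0 (2 - c) := by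
  have hcy : 0 < 1 - c * y := sub_pos.2 (mul_lt_one_of_lt_one_of_mem_Icc hc hy)
  constructor
  · calc
      0 < x * (1 - c * y) + y :=
        add_pos_of_nonneg_of_pos (mul_nonneg hx.1 hcy.le) (hx.1.trans_lt hxy)
      _ = x + y - c * x * y := by ring
  · have gap_pos : 0 < (1 - x) * (1 - c * y) + (1 - y) * (1 - c) :=
      add_pos_of_pos_of_nonneg (mul_pos (sub_pos.2 (hxy.trans_le hy.2)) hcy)
        (mul_nonneg (sub_nonneg.2 hy.2) (sub_pos.2 hc).le)
    linear_combination gap_pos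

theorem affine_pos_of_mem_Ioo {q r : K} (hq : 0 < q) (hr : 0 ≤ q + p * r)
    (ht : t ∈ Set.Ioo 0 r) : 0 < q + p * t := by
  have hr_pos : 0 < r := ht.1.trans ht.2
  refine pos_of_mul_pos_right ?_ hr_pos.le
  calc
    0 < (r - t) * q + t * (q + p * r) :=
      add_pos_of_pos_of_nonneg (mul_pos (sub_pos.2 ht.2) hq) (mul_nonneg ht.1.le hr)
    _ = r * (q + p * t) := by ring

theorem strictAntiOn_quadratic_div_linear (hc : c < 1) (hp : 0 ≤ 1 - c + p * (2 - c)) :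
    StrictAntiOn (fun b => (p * b ^ 2 + b - 1) / (c * b - 1)) (Set.Icc 0 1) := by
  intro x hx y hy hxy
  have hcx : c * x - 1 < 0 := sub_neg.2 (mul_lt_one_of_lt_one_of_mem_Icc hc hx)
  have hcy : c * y - 1 < 0 := sub_neg.2 (mul_lt_one_of_lt_one_of_mem_Icc hc hy)
  have one_sub_add_pos : 0 < 1 - c + p * (x + y - c * x * y) :=
    affine_pos_of_mem_Ioo (sub_pos.2 hc) hp (add_sub_mul_mem_Ioo hc hx hy hxy)
  rw [← sub_pos, quadratic_div_linear_sub p hcx.ne hcy.ne]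
  exact div_pos (mul_pos (sub_pos.2 hxy) one_sub_add_pos) (mul_pos_of_neg_of_neg hcx hcy)

end QuadraticDivLinear

theorem stmt_6_general {a lam : ℝ} (ha : 0 < a) (hlam : lam < 1) (halam : a * lam ≤ 1) :
    StrictAntiOn (s1 a lam) (Set.Icc 0 1) := by
  apply strictAntiOn_quadratic_div_linear
  · have mul_lam_lt : a * lam < a := mul_lt_of_lt_one_right ha hlam
    linarith
  · calc
      0 ≤ a * (1 - lam) ^ 2 * (1 - a * lam) :=
        mul_nonneg (mul_nonneg ha.le (sq_nonneg _)) (sub_nonneg.2 halam)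
      _ = 1 - (a * lam - a + 1) +
          (a * lam ^ 2 - a * lam) * (2 - (a * lam - a + 1)) := by ring

theorem stmt_6 (a lam : ℝ) (ha0 : 0 < a) (ha1 : a < 1)
    (hl0 : 0 ≤ lam) (hl1 : lam < 1) :
    StrictAntiOn (fun b => s1 a lam b) (Set.Ioc (0 : ℝ) 1) :=
  (stmt_6_general ha0 hl1 (mul_le_one₀ ha1.le hl0 hl1.le)).mono Set.Ioc_subset_Icc_self
end

section
/- For α ∈ (0,1) and λ ∈ [0,1), the function s₂(b) = ((1-α)·b² + (αλ+α-1)·b - α)/((αλ-α+1)·b - 1) is strictly increasing (strictly monotone) on the interval (0,1]. -/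
/-!
Numerator minus denominator of `s2 a lam b` is `(1 - a) * (1 - b) ^ 2`. Hence, with `u = 1 - b`,
`s2` equals `1 - (1 - a) * u ^ 2 / (p * u + q)` where `p = a * lam - a + 1` and
`q = a * (1 - lam) = 1 - p`, and for `q ≥ 0` the quotient increases with `u` on the part of
`u ≥ 0` where its denominator is positive.
-/

theorem strictMonoOn_sq_div_affine {K : Type*} [Field K] [LinearOrder K] [IsStrictOrderedRing K]
    {p q : K} (hq : 0 ≤ q) :
    StrictMonoOn (fun u => u ^ 2 / (p * u + q)) {u | 0 ≤ u ∧ 0 < p * u + q} := by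
  rintro v ⟨hv, hv_den⟩ u ⟨-, hu_den⟩ hvu
  have hu : 0 < u := hv.trans_lt hvu
  have cross_diff : u ^ 2 * (p * v + q) - v ^ 2 * (p * u + q) =
      (u - v) * (u * (p * v + q) + q * v) := by ring
  have cross_diff_pos : 0 < (u - v) * (u * (p * v + q) + q * v) :=
    mul_pos (sub_pos.2 hvu) (add_pos_of_pos_of_nonneg (mul_pos hu hv_den) (mul_nonneg hq hv))
  exact (div_lt_div_iff₀ hv_den hu_den).2 (sub_pos.1 (cross_diff ▸ cross_diff_pos))

theorem s2_eq_one_sub_sq_div {a lam b : ℝ} (hb : (a * lam - a + 1) * b ≠ 1) :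
    s2 a lam b =
      1 - (1 - a) * ((1 - b) ^ 2 / ((a * lam - a + 1) * (1 - b) + a * (1 - lam))) := by
  have den_ne : (a * lam - a + 1) * b - 1 ≠ 0 := sub_ne_zero.2 hb
  have den_eq : (a * lam - a + 1) * (1 - b) + a * (1 - lam) =
      -((a * lam - a + 1) * b - 1) := by ring
  rw [s2, den_eq, div_neg, mul_neg, sub_neg_eq_add, mul_div_assoc', one_add_div den_ne]
  congr 1
  ring

theorem stmt_7_general {a lam : ℝ} (ha : a < 1) (hq : 0 ≤ a * (1 - lam)) :
    StrictMonoOn (fun b => s2 a lam b) {b | b ≤ 1 ∧ (a * lam - a + 1) * b < 1} := by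
  rintro x ⟨-, hx_den⟩ y ⟨hy, hy_den⟩ hxy
  have sq_div_lt := strictMonoOn_sq_div_affine (p := a * lam - a + 1) hq
    (a := 1 - y) (b := 1 - x) ⟨by linarith, by linarith⟩ ⟨by linarith, by linarith⟩ (by linarith)
  simp only [s2_eq_one_sub_sq_div hx_den.ne, s2_eq_one_sub_sq_div hy_den.ne]
  exact sub_lt_sub_left (mul_lt_mul_of_pos_left sq_div_lt (sub_pos.2 ha)) 1

theorem stmt_7 (a lam : ℝ) (ha0 : 0 < a) (ha1 : a < 1)
    (hl0 : 0 ≤ lam) (hl1 : lam < 1) :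
    StrictMonoOn (fun b => s2 a lam b) (Set.Ioc (0 : ℝ) 1) := by
  have hq : 0 < a * (1 - lam) := mul_pos ha0 (sub_pos.2 hl1)
  exact (stmt_7_general ha1 hq.le).mono fun b hb => ⟨hb.2, by linarith [mul_pos hq hb.1, hb.2]⟩
end

section
/- For all α ∈ (0,1) and λ ∈ [0,1): 0 < S(α,λ) ≤ 1; equivalently, the speedup factor f(α,λ) = 1/S(α,λ) satisfies f(α,λ) ≥ 1. -/
/-!
The numerator of `S` contains the surd `2 - αλ - α - (1 - λ)√(4α - 3α²)`. Its product with the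
conjugate surd is `4 (1 - α) (αλ - αλ² - α + 1)`, twice the denominator of `S`. Rationalising
therefore cancels both factors of that denominator and leaves

  `S = 2 (1 - αλ) / (2 - αλ - α + (1 - λ)√(4α - 3α²))`.

Since `√(4α - 3α²) ≥ α`, the new denominator is at least `2 (1 - αλ) > 0`, whatever the sign of the
old one.
-/

/-- The conjugate `2 - αλ - α + (1 - λ)√(4α - 3α²)` of the surd in the numerator of `S`; it is the
denominator of `S` after rationalising, and the numerator of `bPlus`. -/
noncomputable def conjSurd (a lam : ℝ) : ℝ :=
  (2 - a * lam - a) + (1 - lam) * Real.sqrt (4 * a - 3 * a ^ 2)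

section

variable {a lam : ℝ}

lemma sq_le_four_mul_sub_three_mul_sq (ha0 : 0 ≤ a) (ha1 : a ≤ 1) :
    a ^ 2 ≤ 4 * a - 3 * a ^ 2 := by
  linarith [mul_nonneg ha0 (sub_nonneg.2 ha1)]

lemma two_mul_one_sub_mul_le_conjSurd (ha0 : 0 ≤ a) (ha1 : a ≤ 1) (hl1 : lam ≤ 1) :
    2 * (1 - a * lam) ≤ conjSurd a lam := by
  have h_sqrt : a ≤ Real.sqrt (4 * a - 3 * a ^ 2) :=
    Real.le_sqrt_of_sq_le (sq_le_four_mul_sub_three_mul_sq ha0 ha1)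
  calc 2 * (1 - a * lam) = (2 - a * lam - a) + (1 - lam) * a := by ring
    _ ≤ conjSurd a lam := by
      unfold conjSurd
      have : 0 ≤ 1 - lam := sub_nonneg.2 hl1
      gcongr

lemma surd_mul_conjSurd (h_rad : 0 ≤ 4 * a - 3 * a ^ 2) :
    ((2 - a * lam - a) + (lam - 1) * Real.sqrt (4 * a - 3 * a ^ 2)) * conjSurd a lam =
      2 * (2 * (1 - a) * (a * lam - a * lam ^ 2 - a + 1)) := by
  unfold conjSurd
  linear_combination (-(1 - lam) ^ 2) * Real.sq_sqrt h_rad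

lemma S_eq_div_conjSurd (h_rad : 0 ≤ 4 * a - 3 * a ^ 2) (ha : a ≠ 1)
    (hD : a * lam - a * lam ^ 2 - a + 1 ≠ 0) :
    S a lam = 2 * (1 - a * lam) / conjSurd a lam := by
  have h_den : 2 * (1 - a) * (a * lam - a * lam ^ 2 - a + 1) ≠ 0 :=
    mul_ne_zero (mul_ne_zero two_ne_zero (sub_ne_zero.2 ha.symm)) hD
  have h_prod := surd_mul_conjSurd (lam := lam) h_rad
  have h_conj : conjSurd a lam ≠ 0 :=
    right_ne_zero_of_mul (h_prod ▸ mul_ne_zero two_ne_zero h_den)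
  rw [S, div_eq_div_iff h_den h_conj]
  linear_combination (1 - a * lam) * h_prod

lemma S_denom_factor_pos (ha0 : 0 ≤ a) (ha1 : a < 1) (hl0 : 0 ≤ lam) (hl1 : lam ≤ 1) :
    0 < a * lam - a * lam ^ 2 - a + 1 := by
  have h_mul : 0 ≤ a * lam * (1 - lam) := mul_nonneg (mul_nonneg ha0 hl0) (sub_nonneg.2 hl1)
  linarith

theorem stmt_10_general (ha0 : 0 ≤ a) (ha1 : a < 1) (hl1 : lam ≤ 1)
    (hD : a * lam - a * lam ^ 2 - a + 1 ≠ 0) :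
    0 < S a lam ∧ S a lam ≤ 1 ∧ 1 / S a lam ≥ 1 := by
  have h_rad : 0 ≤ 4 * a - 3 * a ^ 2 :=
    (sq_nonneg a).trans (sq_le_four_mul_sub_three_mul_sq ha0 ha1.le)
  have h_num : 0 < 2 * (1 - a * lam) :=
    mul_pos two_pos (sub_pos.2 (mul_lt_one_of_nonneg_of_lt_one_left ha0 ha1 hl1))
  have h_le : 2 * (1 - a * lam) ≤ conjSurd a lam :=
    two_mul_one_sub_mul_le_conjSurd ha0 ha1.le hl1
  have h_conj : 0 < conjSurd a lam := h_num.trans_le h_le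
  have hS := S_eq_div_conjSurd h_rad ha1.ne hD
  have hS_pos : 0 < S a lam := hS ▸ div_pos h_num h_conj
  have hS_le : S a lam ≤ 1 := hS ▸ (div_le_one h_conj).2 h_le
  exact ⟨hS_pos, hS_le, (one_le_div hS_pos).2 hS_le⟩

end

theorem stmt_10 (a lam : ℝ) (ha0 : 0 < a) (ha1 : a < 1)
    (hl0 : 0 ≤ lam) (hl1 : lam < 1) :
    0 < S a lam ∧ S a lam ≤ 1 ∧ 1 / S a lam ≥ 1 :=
  stmt_10_general ha0.le ha1 hl1.le (S_denom_factor_pos ha0.le ha1 hl0 hl1.le).ne'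
end

section
/- For each fixed α ∈ (0,1), the function λ ↦ f(α,λ) is monotonically decreasing (antitone) on [0,1). -/
/-!
Since `√(4a - 3a²)² = 4a - 3a²`, multiplying the factor `(2 - aλ - a) - (1 - λ)√(4a - 3a²)` in the
denominator of `f` by its conjugate gives `4(1 - a)(aλ - aλ² - a + 1)`, twice the numerator of `f`.
After cancellation `f` is a linear fractional function of `λ`, so its monotonicity is decided by the
sign of a single determinant, which comes out as `-2(1 - a)(√(4a - 3a²) - a)`.
-/

theorem strictAntiOn_linear_div_linear {K : Type*} [Field K] [LinearOrder K]
    [IsStrictOrderedRing K] {p q r t : K} (hdet : p * t - q * r < 0) :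
    StrictAntiOn (fun x => (p * x + q) / (r * x + t)) {x | 0 < r * x + t} := by
  intro x hx y hy hxy
  have hcross : (p * t - q * r) * (y - x) < 0 := mul_neg_of_neg_of_pos hdet (sub_pos.2 hxy)
  rw [div_lt_div_iff₀ hy hx]
  linear_combination hcross

section SpeedupFactor

variable {a : ℝ}

theorem denom_factor_mul_conj (hrad : 0 ≤ 4 * a - 3 * a ^ 2) (x : ℝ) :
    ((2 - a * x - a) + (x - 1) * √(4 * a - 3 * a ^ 2)) *
        ((2 - a * x - a) + (1 - x) * √(4 * a - 3 * a ^ 2)) =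
      2 * (2 * (1 - a) * (a * x - a * x ^ 2 - a + 1)) := by
  linear_combination -(1 - x) ^ 2 * Real.sq_sqrt hrad

theorem f_eq_linear_div_linear (hrad : 0 ≤ 4 * a - 3 * a ^ 2) {x : ℝ}
    (hne : (2 - a * x - a) + (x - 1) * √(4 * a - 3 * a ^ 2) ≠ 0) :
    f a x = (-(a + √(4 * a - 3 * a ^ 2)) * x + (2 - a + √(4 * a - 3 * a ^ 2))) /
      (-(2 * a) * x + 2) := by
  have hconj := denom_factor_mul_conj hrad x
  unfold f
  generalize √(4 * a - 3 * a ^ 2) = s at hne hconj ⊢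
  calc 2 * (1 - a) * (a * x - a * x ^ 2 - a + 1) /
        ((1 - a * x) * ((2 - a * x - a) + (x - 1) * s))
    _ = ((2 - a * x - a) + (1 - x) * s) * ((2 - a * x - a) + (x - 1) * s) /
        ((2 * (1 - a * x)) * ((2 - a * x - a) + (x - 1) * s)) := by
      rw [mul_comm (_ + (1 - x) * s), hconj, mul_assoc 2 (1 - a * x),
        mul_div_mul_left _ _ two_ne_zero]
    _ = ((2 - a * x - a) + (1 - x) * s) / (2 * (1 - a * x)) := mul_div_mul_right _ _ hne
    _ = (-(a + s) * x + (2 - a + s)) / (-(2 * a) * x + 2) := by congr 1 <;> ring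

theorem one_sub_mul_sqrt_sub_pos (ha : 0 < a) (hrad : 0 ≤ 4 * a - 3 * a ^ 2) (ha1 : a ≠ 1) :
    0 < (1 - a) * (√(4 * a - 3 * a ^ 2) - a) := by
  have hprod : (1 - a) * (√(4 * a - 3 * a ^ 2) - a) * (√(4 * a - 3 * a ^ 2) + a) =
      4 * a * (1 - a) ^ 2 := by
    linear_combination (1 - a) * Real.sq_sqrt hrad
  have hsq : 0 < (1 - a) ^ 2 := sq_pos_of_ne_zero (sub_ne_zero.2 ha1.symm)
  refine pos_of_mul_pos_left (b := √(4 * a - 3 * a ^ 2) + a) ?_ (by positivity)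
  rw [hprod]
  exact mul_pos (by positivity) hsq

theorem sqrt_lt_two_sub (ha2 : a < 2) (ha1 : a ≠ 1) : √(4 * a - 3 * a ^ 2) < 2 - a := by
  have hsq : 0 < (1 - a) ^ 2 := sq_pos_of_ne_zero (sub_ne_zero.2 ha1.symm)
  rw [Real.sqrt_lt' (sub_pos.2 ha2)]
  linear_combination 4 * hsq

theorem denom_factor_pos (ha1 : a < 1) {x : ℝ} (hx : x ∈ Set.Icc 0 1) :
    0 < (2 - a * x - a) + (x - 1) * √(4 * a - 3 * a ^ 2) := by
  -- The factor is affine in `x`, so it is enough that it is positive at `x = 0` and `x = 1`.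
  have hzero : 0 < 2 - a - √(4 * a - 3 * a ^ 2) :=
    sub_pos.2 (sqrt_lt_two_sub (by linarith) ha1.ne)
  have hone : 0 < 2 * (1 - a) := by linarith
  have hcombo := convex_Ioi (0 : ℝ) hzero hone (sub_nonneg.2 hx.2) hx.1 (sub_add_cancel 1 x)
  simp only [smul_eq_mul, Set.mem_Ioi] at hcombo
  linear_combination hcombo

theorem stmt_13_general (ha : 0 < a) (hrad : 0 ≤ 4 * a - 3 * a ^ 2) :
    StrictAntiOn (f a)
      {x | 0 < 1 - a * x ∧ (2 - a * x - a) + (x - 1) * √(4 * a - 3 * a ^ 2) ≠ 0} := by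
  rintro x ⟨hx, hxne⟩ y ⟨hy, hyne⟩ hxy
  have ha1 : a ≠ 1 := by
    rintro rfl
    exact hxne (by norm_num; ring)
  have hdet : -(a + √(4 * a - 3 * a ^ 2)) * 2 - (2 - a + √(4 * a - 3 * a ^ 2)) * -(2 * a) < 0 := by
    linear_combination 2 * one_sub_mul_sqrt_sub_pos ha hrad ha1
  rw [f_eq_linear_div_linear hrad hxne, f_eq_linear_div_linear hrad hyne]
  refine strictAntiOn_linear_div_linear hdet ?_ ?_ hxy
  · change 0 < -(2 * a) * x + 2
    linear_combination 2 * hx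
  · change 0 < -(2 * a) * y + 2
    linear_combination 2 * hy

end SpeedupFactor

theorem stmt_13 (a : ℝ) (ha0 : 0 < a) (ha1 : a < 1) :
    AntitoneOn (fun lam => f a lam) (Set.Ico (0 : ℝ) 1) :=
  (stmt_13_general ha0 (by nlinarith)).antitoneOn.mono fun _ hx =>
    ⟨by nlinarith [hx.2], (denom_factor_pos ha1 (Set.Ico_subset_Icc_self hx)).ne'⟩
end
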